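/- There are exactly 9 isomorphism classes of 5-dimensional nilpotent Lie algebras over any field k with char(k) ≠ 2. -/

import Mathlib

/-- `br` is a Lie bracket on `kⁿ`: bilinear, alternating, and satisfying the Jacobi
identity (in Leibniz form). -/
def IsLieBracket (k : Type*) [Field k] {n : ℕ}
    (br : (Fin n → k) → (Fin n → k) → (Fin n → k)) : Prop :=
  (∀ x y z, br (x + y) z = br x z + br y z) ∧
  (∀ (c : k) (x y), br (c • x) y = c • br x y) ∧
  (∀ x y z, br x (y + z) = br x y + br x z) ∧
  (∀ (c : k) (x y), br x (c • y) = c • br x y) ∧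
  (∀ x, br x x = 0) ∧
  (∀ x y z, br x (br y z) = br (br x y) z + br y (br x z))

/-- The lower central series of a bracket on `kⁿ`. -/
noncomputable def lcs {k : Type*} [Field k] {n : ℕ}
    (br : (Fin n → k) → (Fin n → k) → (Fin n → k)) : ℕ → Submodule k (Fin n → k)
  | 0 => ⊤
  | m + 1 => Submodule.span k {w | ∃ x y, y ∈ lcs br m ∧ w = br x y}

/-- A bracket is nilpotent if its lower central series reaches `0`. -/
def IsNilpotentBracket {k : Type*} [Field k] {n : ℕ}
    (br : (Fin n → k) → (Fin n → k) → (Fin n → k)) : Prop :=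
  ∃ m, lcs br m = ⊥

/-- Two brackets on `kⁿ` are isomorphic if some linear automorphism of `kⁿ`
intertwines them. -/
def BracketIso {k : Type*} [Field k] {n : ℕ}
    (br br' : (Fin n → k) → (Fin n → k) → (Fin n → k)) : Prop :=
  ∃ e : (Fin n → k) ≃ₗ[k] (Fin n → k), ∀ x y, e (br x y) = br' (e x) (e y)

/-- The type of nilpotent Lie algebra structures on `kⁿ`. -/
def NilpLieStr (k : Type*) [Field k] (n : ℕ) : Type _ :=
  {br : (Fin n → k) → (Fin n → k) → (Fin n → k) // IsLieBracket k br ∧ IsNilpotentBracket br}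

theorem BracketIso.trans {k : Type*} [Field k] {n : ℕ}
    {br br' br'' : (Fin n → k) → (Fin n → k) → (Fin n → k)}
    (h : BracketIso br br') (h' : BracketIso br' br'') : BracketIso br br'' := by
  obtain ⟨e, he⟩ := h
  obtain ⟨e', he'⟩ := h'
  exact ⟨e.trans e', fun x y => by simp [he, he']⟩

/-- A matrix with nonzero determinant whose rows satisfy the relations of `br` inside `br'`
gives an isomorphism from `br` to `br'`. -/
theorem BracketIso.of_vecMul {k : Type*} [Field k] {n : ℕ}
    {br br' : (Fin n → k) → (Fin n → k) → (Fin n → k)} (M : Matrix (Fin n) (Fin n) k)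
    (hM : M.det ≠ 0)
    (h : ∀ x y, Matrix.vecMul (br x y) M = br' (Matrix.vecMul x M) (Matrix.vecMul y M)) :
    BracketIso br br' :=
  ⟨LinearEquiv.ofInjectiveEndo M.vecMulLinear
    (Matrix.vecMul_injective_of_isUnit ((Matrix.isUnit_iff_isUnit_det M).2 hM.isUnit)), h⟩

/-- The brackets on `k⁵` compatible with the standard flag: `[eᵢ, eⱼ]` for `i < j` lies in the
span of the `eₗ` with `l > j`. -/
def flagBracket {k : Type*} [Field k] (a b c d e f g h i j : k) (x y : Fin 5 → k) : Fin 5 → k :=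
  ![0, 0,
    a * (x 0 * y 1 - x 1 * y 0),
    b * (x 0 * y 1 - x 1 * y 0) + d * (x 0 * y 2 - x 2 * y 0) + g * (x 1 * y 2 - x 2 * y 1),
    c * (x 0 * y 1 - x 1 * y 0) + e * (x 0 * y 2 - x 2 * y 0) + f * (x 0 * y 3 - x 3 * y 0) +
      h * (x 1 * y 2 - x 2 * y 1) + i * (x 1 * y 3 - x 3 * y 1) + j * (x 2 * y 3 - x 3 * y 2)]

/-- Representatives of the nine isomorphism classes. -/
def nilpModel (k : Type*) [Field k] :
    Fin 9 → (Fin 5 → k) → (Fin 5 → k) → (Fin 5 → k) :=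
  ![flagBracket 0 0 0 0 0 0 0 0 0 0,
    flagBracket 1 0 0 0 0 0 0 0 0 0,
    flagBracket 1 0 0 1 0 0 0 0 0 0,
    flagBracket 0 0 1 0 0 0 0 0 0 1,
    flagBracket 1 0 0 0 1 0 0 0 1 0,
    flagBracket 1 0 0 1 0 1 0 1 0 0,
    flagBracket 1 0 0 1 0 1 0 0 0 0,
    flagBracket 0 1 0 0 1 0 0 0 0 0,
    flagBracket 1 0 0 1 0 0 0 1 0 0]

/-- A bracket is standard if it is isomorphic to one of the nine representatives. -/
def IsStandard {k : Type*} [Field k] (br : (Fin 5 → k) → (Fin 5 → k) → (Fin 5 → k)) : Prop :=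
  ∃ n, BracketIso (nilpModel k n) br

theorem IsStandard.of_iso {k : Type*} [Field k]
    {br br' : (Fin 5 → k) → (Fin 5 → k) → (Fin 5 → k)} (hs : IsStandard br)
    (h : BracketIso br br') : IsStandard br' :=
  hs.imp fun _ hn => hn.trans h

set_option maxHeartbeats 1000000 in
theorem isStandard_heisenberg_action {k : Type*} [Field k] {c d g j : k} (hj : j ≠ 0) :
    IsStandard (flagBracket 0 0 c d 0 0 g 0 0 j) := by
  obtain rfl | hg := eq_or_ne g 0
  · obtain rfl | hd := eq_or_ne d 0
    · obtain rfl | hc := eq_or_ne c 0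
      · refine ⟨1, .of_vecMul
            !![0,0,1,0,0; 0,0,0,1,0; 0,0,0,0,j; 1,0,0,0,0; 0,1,0,0,0] ?_ fun x y => ?_⟩
        · simp [Matrix.det_succ_row_zero, Fin.sum_univ_succ, Fin.succAbove, *]
        · ext l
          fin_cases l <;>
            simp [nilpModel, flagBracket, -mul_eq_mul_left_iff,
              Matrix.vecMul, dotProduct, Fin.sum_univ_five] <;>
            ring
      · refine ⟨3, .of_vecMul
            !![j,0,0,0,0; 0,1,0,0,0; 0,0,c,0,0; 0,0,0,1,0; 0,0,0,0,c*j] ?_ fun x y => ?_⟩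
        · simp [Matrix.det_succ_row_zero, Fin.sum_univ_succ, Fin.succAbove, *]
        · ext l
          fin_cases l <;>
            simp [nilpModel, flagBracket, -mul_eq_mul_left_iff,
              Matrix.vecMul, dotProduct, Fin.sum_univ_five] <;>
            ring
    · obtain rfl | hc := eq_or_ne c 0
      · refine ⟨2, .of_vecMul
            !![0,0,1,0,0; 1,0,0,0,0; 0,0,0,-d,0; 0,0,0,0,-(d*j); 0,1,0,0,0] ?_ fun x y => ?_⟩
        · simp [Matrix.det_succ_row_zero, Fin.sum_univ_succ, Fin.succAbove, *]
        · ext l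
          fin_cases l <;>
            simp [nilpModel, flagBracket, -mul_eq_mul_left_iff,
              Matrix.vecMul, dotProduct, Fin.sum_univ_five] <;>
            ring
      · refine ⟨4, .of_vecMul
            !![0,0,c,0,0; 1,0,0,0,0; 0,0,0,-(c*d),0; 0,-(c*d*j),0,0,0; 0,0,0,0,-(c^2*d*j)]
            ?_ fun x y => ?_⟩
        · simp [Matrix.det_succ_row_zero, Fin.sum_univ_succ, Fin.succAbove, *]
        · ext l
          fin_cases l <;>
            simp [nilpModel, flagBracket, -mul_eq_mul_left_iff,
              Matrix.vecMul, dotProduct, Fin.sum_univ_five] <;>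
            ring
  · obtain rfl | hc := eq_or_ne c 0
    · refine ⟨2, .of_vecMul
          !![0,0,1,0,0; 0,1,0,0,0; 0,0,0,-g,0; 0,0,0,0,-(g*j); g,-d,0,0,0] ?_ fun x y => ?_⟩
      · simp [Matrix.det_succ_row_zero, Fin.sum_univ_succ, Fin.succAbove, *]
      · ext l
        fin_cases l <;>
          simp [nilpModel, flagBracket, -mul_eq_mul_left_iff,
            Matrix.vecMul, dotProduct, Fin.sum_univ_five] <;>
          ring
    · refine ⟨4, .of_vecMul
          !![0,0,c,0,0; 0,1,0,0,0; 0,0,0,-(c*g),0; c*j*g,-(c*j*d),0,0,0; 0,0,0,0,-(c^2*g*j)]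
          ?_ fun x y => ?_⟩
      · simp [Matrix.det_succ_row_zero, Fin.sum_univ_succ, Fin.succAbove, *]
      · ext l
        fin_cases l <;>
          simp [nilpModel, flagBracket, -mul_eq_mul_left_iff,
            Matrix.vecMul, dotProduct, Fin.sum_univ_five] <;>
          ring

set_option maxHeartbeats 1000000 in
theorem isStandard_of_bracket_two_three_ne {k : Type*} [Field k] {b c d e f g h i j : k}
    (hj : j ≠ 0) (hJ : g * f = d * i - b * j) :
    IsStandard (flagBracket 0 b c d e f g h i j) := by
  refine (isStandard_heisenberg_action (c := j * (j * c - i * e + h * f)) (d := j * d)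
    (g := j * g) hj).of_iso (.of_vecMul
          !![j,0,-f,e,0; 0,j,-i,h,0; 0,0,1,0,0; 0,0,0,1,0; 0,0,0,0,1] ?_ fun x y => ?_)
  · simp [Matrix.det_succ_row_zero, Fin.sum_univ_succ, Fin.succAbove, *]
  · ext l
    fin_cases l <;>
      simp [flagBracket, -mul_eq_mul_left_iff,
        Matrix.vecMul, dotProduct, Fin.sum_univ_five] <;>
      first | ring1 | linear_combination -(j * (x 0 * y 1 - x 1 * y 0)) * hJ

set_option maxHeartbeats 1000000 in
theorem isStandard_of_chain {k : Type*} [Field k] {a b c d e f h : k} (hd : d ≠ 0) (hf : f ≠ 0) :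
    IsStandard (flagBracket a b c d e f 0 h 0 0) := by
  obtain rfl | ha := eq_or_ne a 0
  · obtain rfl | hh := eq_or_ne h 0
    · refine ⟨2, .of_vecMul
          !![1,0,0,0,0; 0,0,1,0,0; 0,0,0,d,e; 0,0,0,0,d*f; 0,d*f,-(b*f),b*e-d*c,0] ?_ fun x y => ?_⟩
      · simp [Matrix.det_succ_row_zero, Fin.sum_univ_succ, Fin.succAbove, *]
      · ext l
        fin_cases l <;>
          simp [nilpModel, flagBracket, -mul_eq_mul_left_iff,
            Matrix.vecMul, dotProduct, Fin.sum_univ_five] <;>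
          ring
    · refine ⟨4, .of_vecMul
          !![h,0,0,0,0; 0,0,1,0,0; 0,0,0,h*d,h*e; 0,-h*(d*f),h*(b*f),-h*(b*e-d*c),0;
            0,0,0,0,h^2*d*f]
          ?_ fun x y => ?_⟩
      · simp [Matrix.det_succ_row_zero, Fin.sum_univ_succ, Fin.succAbove, *]
      · ext l
        fin_cases l <;>
          simp [nilpModel, flagBracket, -mul_eq_mul_left_iff,
            Matrix.vecMul, dotProduct, Fin.sum_univ_five] <;>
          ring
  · obtain rfl | hh := eq_or_ne h 0
    · refine ⟨6, .of_vecMul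
          !![1,0,0,0,0; 0,1,0,0,0; 0,0,a,b,c; 0,0,0,a*d,a*e+b*f; 0,0,0,0,a*d*f] ?_ fun x y => ?_⟩
      · simp [Matrix.det_succ_row_zero, Fin.sum_univ_succ, Fin.succAbove, *]
      · ext l
        fin_cases l <;>
          simp [nilpModel, flagBracket, -mul_eq_mul_left_iff,
            Matrix.vecMul, dotProduct, Fin.sum_univ_five] <;>
          ring
    · refine ⟨5, .of_vecMul
          !![h,0,0,0,0; 0,h*d*f,0,0,0; 0,0,h^2*d*f*a,h^2*d*f*b,h^2*d*f*c;
            0,0,0,h^3*d*f*a*d,h^3*d*f*(a*e+b*f); 0,0,0,0,h^4*d*f*a*d*f]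
          ?_ fun x y => ?_⟩
      · simp [Matrix.det_succ_row_zero, Fin.sum_univ_succ, Fin.succAbove, *]
      · ext l
        fin_cases l <;>
          simp [nilpModel, flagBracket, -mul_eq_mul_left_iff,
            Matrix.vecMul, dotProduct, Fin.sum_univ_five] <;>
          ring

set_option maxHeartbeats 1000000 in
theorem isStandard_of_three_chain {k : Type*} [Field k] {a b c d e h : k} (hd : d ≠ 0) :
    IsStandard (flagBracket a b c d e 0 0 h 0 0) := by
  obtain rfl | ha := eq_or_ne a 0
  · obtain rfl | hh := eq_or_ne h 0
    · by_cases hc : d * c = b * e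
      · refine ⟨1, .of_vecMul
            !![1,0,0,0,0; 0,0,1,0,0; 0,0,0,d,e; 0,d,-b,0,0; 0,0,0,0,1] ?_ fun x y => ?_⟩
        · simp [Matrix.det_succ_row_zero, Fin.sum_univ_succ, Fin.succAbove, *]
        · ext l
          fin_cases l <;>
            simp [nilpModel, flagBracket, -mul_eq_mul_left_iff,
              Matrix.vecMul, dotProduct, Fin.sum_univ_five] <;>
            first | ring1 | linear_combination -(x 0 * y 3 - x 3 * y 0) * hc
      · replace hc : d * c - b * e ≠ 0 := sub_ne_zero.2 hc
        refine ⟨7, .of_vecMul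
              !![1,0,0,0,0; 0,d,-b,0,0; 0,0,1,0,0; 0,0,0,0,d*c-b*e; 0,0,0,d,e] ?_ fun x y => ?_⟩
        · simp [Matrix.det_succ_row_zero, Fin.sum_univ_succ, Fin.succAbove, *]
        · ext l
          fin_cases l <;>
            simp [nilpModel, flagBracket, -mul_eq_mul_left_iff,
              Matrix.vecMul, dotProduct, Fin.sum_univ_five] <;>
            ring
    · refine ⟨7, .of_vecMul
          !![0,0,1,0,0; 0,d,-b,0,0; d*h,0,d*c-b*e,0,0; 0,0,0,0,-(d*h); 0,0,0,-(d*h*d),-(d*h*e)]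
          ?_ fun x y => ?_⟩
      · simp [Matrix.det_succ_row_zero, Fin.sum_univ_succ, Fin.succAbove, *]
      · ext l
        fin_cases l <;>
          simp [nilpModel, flagBracket, -mul_eq_mul_left_iff,
            Matrix.vecMul, dotProduct, Fin.sum_univ_five] <;>
          ring
  · obtain rfl | hh := eq_or_ne h 0
    · refine ⟨2, .of_vecMul
          !![1,0,0,0,0; 0,1,0,0,0; 0,0,a,b,c; 0,0,0,a*d,a*e; 0,0,0,0,1] ?_ fun x y => ?_⟩
      · simp [Matrix.det_succ_row_zero, Fin.sum_univ_succ, Fin.succAbove, *]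
      · ext l
        fin_cases l <;>
          simp [nilpModel, flagBracket, -mul_eq_mul_left_iff,
            Matrix.vecMul, dotProduct, Fin.sum_univ_five] <;>
          ring
    · refine ⟨8, .of_vecMul
          !![1,0,0,0,0; 0,1,0,0,0; 0,0,a,b,c; 0,0,0,a*d,a*e; 0,0,0,0,a*h] ?_ fun x y => ?_⟩
      · simp [Matrix.det_succ_row_zero, Fin.sum_univ_succ, Fin.succAbove, *]
      · ext l
        fin_cases l <;>
          simp [nilpModel, flagBracket, -mul_eq_mul_left_iff,
            Matrix.vecMul, dotProduct, Fin.sum_univ_five] <;>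
          ring

set_option maxHeartbeats 1000000 in
theorem isStandard_of_four_action {k : Type*} [Field k] {a b c e f h : k} (hf : f ≠ 0) :
    IsStandard (flagBracket a b c 0 e f 0 h 0 0) := by
  obtain rfl | ha := eq_or_ne a 0
  · obtain rfl | hb := eq_or_ne b 0
    · obtain rfl | hh := eq_or_ne h 0
      · refine ⟨1, .of_vecMul
            !![1,0,0,0,0; 0,0,0,1,0; 0,0,0,0,f; 0,f,0,-c,0; 0,0,f,-e,0] ?_ fun x y => ?_⟩
        · simp [Matrix.det_succ_row_zero, Fin.sum_univ_succ, Fin.succAbove, *]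
        · ext l
          fin_cases l <;>
            simp [nilpModel, flagBracket, -mul_eq_mul_left_iff,
              Matrix.vecMul, dotProduct, Fin.sum_univ_five] <;>
            ring
      · refine ⟨3, .of_vecMul
            !![1,0,0,0,0; 0,0,0,f*h,0; 0,f,0,-c,0; 0,0,f,-e,0; 0,0,0,0,f^2*h] ?_ fun x y => ?_⟩
        · simp [Matrix.det_succ_row_zero, Fin.sum_univ_succ, Fin.succAbove, *]
        · ext l
          fin_cases l <;>
            simp [nilpModel, flagBracket, -mul_eq_mul_left_iff,
              Matrix.vecMul, dotProduct, Fin.sum_univ_five] <;>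
            ring
    · obtain rfl | hh := eq_or_ne h 0
      · refine ⟨2, .of_vecMul
            !![1,0,0,0,0; 0,1,0,0,0; 0,0,0,b,c; 0,0,0,0,b*f; 0,0,f,-e,0] ?_ fun x y => ?_⟩
        · simp [Matrix.det_succ_row_zero, Fin.sum_univ_succ, Fin.succAbove, *]
        · ext l
          fin_cases l <;>
            simp [nilpModel, flagBracket, -mul_eq_mul_left_iff,
              Matrix.vecMul, dotProduct, Fin.sum_univ_five] <;>
            ring
      · refine ⟨4, .of_vecMul
            !![h,0,0,0,0; 0,1,0,0,0; 0,0,0,h*b,h*c; 0,0,h*b*f,-(h*b*e),0; 0,0,0,0,h^2*b*f]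
            ?_ fun x y => ?_⟩
        · simp [Matrix.det_succ_row_zero, Fin.sum_univ_succ, Fin.succAbove, *]
        · ext l
          fin_cases l <;>
            simp [nilpModel, flagBracket, -mul_eq_mul_left_iff,
              Matrix.vecMul, dotProduct, Fin.sum_univ_five] <;>
            ring
  · obtain rfl | hh := eq_or_ne h 0
    · by_cases hm : a * e + b * f = 0
      · refine ⟨7, .of_vecMul
            !![1,0,0,0,0; 0,1,0,0,0; 0,0,0,1,0; 0,0,a,b,c; 0,0,0,0,f] ?_ fun x y => ?_⟩
        · simp [Matrix.det_succ_row_zero, Fin.sum_univ_succ, Fin.succAbove, *]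
        · ext l
          fin_cases l <;>
            simp [nilpModel, flagBracket, -mul_eq_mul_left_iff,
              Matrix.vecMul, dotProduct, Fin.sum_univ_five] <;>
            first | ring1 | linear_combination -(x 0 * y 3 - x 3 * y 0) * hm
      · refine ⟨2, .of_vecMul
            !![1,0,0,0,0; 0,1,0,0,0; 0,0,a,b,c; 0,0,0,0,a*e+b*f; 0,0,-(f*a),a*e,0] ?_ fun x y => ?_⟩
        · convert neg_ne_zero.2 (mul_ne_zero ha (pow_ne_zero 2 hm)) using 1
          simp [Matrix.det_succ_row_zero, Fin.sum_univ_succ, Fin.succAbove]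
          ring
        · ext l
          fin_cases l <;>
            simp [nilpModel, flagBracket, -mul_eq_mul_left_iff,
              Matrix.vecMul, dotProduct, Fin.sum_univ_five] <;>
            ring
    · refine ⟨4, .of_vecMul
          !![0,f,0,0,0; a*h,-(a*e+b*f),0,0,0; 0,0,-(a*h*f)*a,-(a*h*f)*b,-(a*h*f)*c;
            0,0,0,-(f*a*h),0; 0,0,0,0,-(f*a*h)^2]
          ?_ fun x y => ?_⟩
      · simp [Matrix.det_succ_row_zero, Fin.sum_univ_succ, Fin.succAbove, *]
      · ext l
        fin_cases l <;>
          simp [nilpModel, flagBracket, -mul_eq_mul_left_iff,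
            Matrix.vecMul, dotProduct, Fin.sum_univ_five] <;>
          ring

set_option maxHeartbeats 1000000 in
theorem isStandard_of_three_action {k : Type*} [Field k] {a b c e h : k} :
    IsStandard (flagBracket a b c 0 e 0 0 h 0 0) := by
  obtain rfl | he := eq_or_ne e 0
  · obtain rfl | hh := eq_or_ne h 0
    · obtain rfl | ha := eq_or_ne a 0
      · obtain rfl | hb := eq_or_ne b 0
        · obtain rfl | hc := eq_or_ne c 0
          · refine ⟨0, .of_vecMul
                !![1,0,0,0,0; 0,1,0,0,0; 0,0,1,0,0; 0,0,0,1,0; 0,0,0,0,1] ?_ fun x y => ?_⟩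
            · simp [Matrix.det_succ_row_zero, Fin.sum_univ_succ, Fin.succAbove, *]
            · ext l
              fin_cases l <;>
                simp [nilpModel, flagBracket, -mul_eq_mul_left_iff,
                  Matrix.vecMul, dotProduct, Fin.sum_univ_five]
          · refine ⟨1, .of_vecMul
                !![1,0,0,0,0; 0,1,0,0,0; 0,0,0,0,c; 0,0,1,0,0; 0,0,0,1,0] ?_ fun x y => ?_⟩
            · simp [Matrix.det_succ_row_zero, Fin.sum_univ_succ, Fin.succAbove, *]
            · ext l
              fin_cases l <;>
                simp [nilpModel, flagBracket, -mul_eq_mul_left_iff,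
                  Matrix.vecMul, dotProduct, Fin.sum_univ_five] <;>
                ring
        · refine ⟨1, .of_vecMul
              !![1,0,0,0,0; 0,1,0,0,0; 0,0,0,b,c; 0,0,1,0,0; 0,0,0,0,1] ?_ fun x y => ?_⟩
          · simp [Matrix.det_succ_row_zero, Fin.sum_univ_succ, Fin.succAbove, *]
          · ext l
            fin_cases l <;>
              simp [nilpModel, flagBracket, -mul_eq_mul_left_iff,
                Matrix.vecMul, dotProduct, Fin.sum_univ_five] <;>
              ring
      · refine ⟨1, .of_vecMul
            !![1,0,0,0,0; 0,1,0,0,0; 0,0,a,b,c; 0,0,0,1,0; 0,0,0,0,1] ?_ fun x y => ?_⟩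
        · simp [Matrix.det_succ_row_zero, Fin.sum_univ_succ, Fin.succAbove, *]
        · ext l
          fin_cases l <;>
            simp [nilpModel, flagBracket, -mul_eq_mul_left_iff,
              Matrix.vecMul, dotProduct, Fin.sum_univ_five] <;>
            ring
    · obtain rfl | ha := eq_or_ne a 0
      · obtain rfl | hb := eq_or_ne b 0
        · refine ⟨1, .of_vecMul
              !![0,1,0,0,0; 0,0,1,0,0; 0,0,0,0,h; h,0,c,0,0; 0,0,0,1,0] ?_ fun x y => ?_⟩
          · simp [Matrix.det_succ_row_zero, Fin.sum_univ_succ, Fin.succAbove, *]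
          · ext l
            fin_cases l <;>
              simp [nilpModel, flagBracket, -mul_eq_mul_left_iff,
                Matrix.vecMul, dotProduct, Fin.sum_univ_five] <;>
              ring
        · refine ⟨7, .of_vecMul
              !![0,1,0,0,0; 1,0,0,0,0; 0,0,1,0,0; 0,0,0,-b,-c; 0,0,0,0,h] ?_ fun x y => ?_⟩
          · simp [Matrix.det_succ_row_zero, Fin.sum_univ_succ, Fin.succAbove, *]
          · ext l
            fin_cases l <;>
              simp [nilpModel, flagBracket, -mul_eq_mul_left_iff,
                Matrix.vecMul, dotProduct, Fin.sum_univ_five] <;>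
              ring
      · refine ⟨2, .of_vecMul
            !![0,1,0,0,0; 1,0,0,0,0; 0,0,-a,-b,-c; 0,0,0,0,-(a*h); 0,0,0,1,0] ?_ fun x y => ?_⟩
        · simp [Matrix.det_succ_row_zero, Fin.sum_univ_succ, Fin.succAbove, *]
        · ext l
          fin_cases l <;>
            simp [nilpModel, flagBracket, -mul_eq_mul_left_iff,
              Matrix.vecMul, dotProduct, Fin.sum_univ_five] <;>
            ring
  · obtain rfl | ha := eq_or_ne a 0
    · obtain rfl | hb := eq_or_ne b 0
      · refine ⟨1, .of_vecMul
            !![1,0,0,0,0; 0,0,1,0,0; 0,0,0,0,e; -h,e,-c,0,0; 0,0,0,1,0] ?_ fun x y => ?_⟩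
        · simp [Matrix.det_succ_row_zero, Fin.sum_univ_succ, Fin.succAbove, *]
        · ext l
          fin_cases l <;>
            simp [nilpModel, flagBracket, -mul_eq_mul_left_iff,
              Matrix.vecMul, dotProduct, Fin.sum_univ_five] <;>
            ring
      · refine ⟨7, .of_vecMul
            !![1,0,0,0,0; -h,e,0,0,0; 0,0,1,0,0; 0,0,0,e*b,e*c; 0,0,0,0,e] ?_ fun x y => ?_⟩
        · simp [Matrix.det_succ_row_zero, Fin.sum_univ_succ, Fin.succAbove, *]
        · ext l
          fin_cases l <;>
            simp [nilpModel, flagBracket, -mul_eq_mul_left_iff,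
              Matrix.vecMul, dotProduct, Fin.sum_univ_five] <;>
            ring
    · refine ⟨2, .of_vecMul
          !![1,0,0,0,0; -h,e,0,0,0; 0,0,e*a,e*b,e*c; 0,0,0,0,e*a*e; 0,0,0,1,0] ?_ fun x y => ?_⟩
      · simp [Matrix.det_succ_row_zero, Fin.sum_univ_succ, Fin.succAbove, *]
      · ext l
        fin_cases l <;>
          simp [nilpModel, flagBracket, -mul_eq_mul_left_iff,
            Matrix.vecMul, dotProduct, Fin.sum_univ_five] <;>
          ring

theorem isStandard_of_two_central {k : Type*} [Field k] {a b c d e f h : k} :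
    IsStandard (flagBracket a b c d e f 0 h 0 0) := by
  obtain rfl | hd := eq_or_ne d 0 <;> obtain rfl | hf := eq_or_ne f 0
  · exact isStandard_of_three_action
  · exact isStandard_of_four_action hf
  · exact isStandard_of_three_chain hd
  · exact isStandard_of_chain hd hf

set_option maxHeartbeats 1000000 in
theorem isStandard_of_bracket_two_three_eq_zero {k : Type*} [Field k] {a b c d e f g h i : k}
    (hJ : g * f = d * i) :
    IsStandard (flagBracket a b c d e f g h i 0) := by
  obtain rfl | hd := eq_or_ne d 0
  · obtain rfl | hf := eq_or_ne f 0
    · refine (isStandard_of_two_central (a := a) (b := b) (c := c) (d := g) (e := h)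
        (f := i) (h := -e)).of_iso (.of_vecMul
              !![0,1,0,0,0; -1,0,0,0,0; 0,0,1,0,0; 0,0,0,1,0; 0,0,0,0,1] ?_ fun x y => ?_)
      · simp [Matrix.det_succ_row_zero, Fin.sum_univ_succ, Fin.succAbove, *]
      · ext l
        fin_cases l <;>
          simp [flagBracket, -mul_eq_mul_left_iff,
            Matrix.vecMul, dotProduct, Fin.sum_univ_five] <;>
          ring
    · obtain rfl : g = 0 := by simpa [hf] using hJ
      refine (isStandard_of_two_central (a := f * a) (b := f * b) (c := f * c) (d := 0)
        (e := e) (f := f) (h := f * h - i * e)).of_iso (.of_vecMul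
          !![1,0,0,0,0; -i,f,0,0,0; 0,0,1,0,0; 0,0,0,1,0; 0,0,0,0,1] ?_ fun x y => ?_)
      · simp [Matrix.det_succ_row_zero, Fin.sum_univ_succ, Fin.succAbove, *]
      · ext l
        fin_cases l <;>
          simp [flagBracket, -mul_eq_mul_left_iff,
            Matrix.vecMul, dotProduct, Fin.sum_univ_five] <;>
          ring
  · refine (isStandard_of_two_central (a := d * a) (b := d * b) (c := d * c) (d := d)
      (e := e) (f := f) (h := d * h - g * e)).of_iso (.of_vecMul
        !![1,0,0,0,0; -g,d,0,0,0; 0,0,1,0,0; 0,0,0,1,0; 0,0,0,0,1] ?_ fun x y => ?_)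
    · simp [Matrix.det_succ_row_zero, Fin.sum_univ_succ, Fin.succAbove, *]
    · ext l
      fin_cases l <;>
        simp [flagBracket, -mul_eq_mul_left_iff,
          Matrix.vecMul, dotProduct, Fin.sum_univ_five] <;>
        first | ring1 | linear_combination (x 1 * y 3 - x 3 * y 1) * hJ

theorem isStandard_flagBracket {k : Type*} [Field k] {a b c d e f g h i j : k} (haj : a * j = 0)
    (hJ : g * f = d * i - b * j) : IsStandard (flagBracket a b c d e f g h i j) := by
  obtain rfl | hj := eq_or_ne j 0
  · exact isStandard_of_bracket_two_three_eq_zero (by simpa using hJ)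
  · obtain rfl : a = 0 := by simpa [hj] using haj
    exact isStandard_of_bracket_two_three_ne hj hJ

theorem isLieBracket_flagBracket {k : Type*} [Field k] {a b c d e f g h i j : k}
    (haj : a * j = 0) (hJ : g * f = d * i - b * j) :
    IsLieBracket k (flagBracket a b c d e f g h i j) := by
  refine ⟨?_, ?_, ?_, ?_, ?_, ?_⟩
  iterate 4
    intros
    ext l
    fin_cases l <;> simp [flagBracket] <;> ring
  · intro x
    ext l
    fin_cases l <;> simp [flagBracket, -mul_eq_zero] <;> ring
  · intro x y z
    ext l
    fin_cases l <;> simp [flagBracket]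
    · ring
    · linear_combination
        (x 0 * (y 1 * z 2 - y 2 * z 1) - x 1 * (y 0 * z 2 - y 2 * z 0) +
          x 2 * (y 0 * z 1 - y 1 * z 0)) * hJ -
        (x 0 * (y 1 * z 3 - y 3 * z 1) - x 1 * (y 0 * z 3 - y 3 * z 0) +
          x 3 * (y 0 * z 1 - y 1 * z 0)) * haj

theorem isNilpotentBracket_flagBracket {k : Type*} [Field k] (a b c d e f g h i j : k) :
    IsNilpotentBracket (flagBracket a b c d e f g h i j) := by
  have key : ∀ m, ∀ x ∈ lcs (flagBracket a b c d e f g h i j) m,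
      ∀ l : Fin 5, (l : ℕ) < m → x l = 0 := by
    intro m
    induction m with
    | zero => simp
    | succ m ih =>
      intro x hx
      rw [lcs] at hx
      induction hx using Submodule.span_induction with
      | zero => simp
      | add u v _ _ hu hv => exact fun l hl => by simp [hu l hl, hv l hl]
      | smul r u _ hu => exact fun l hl => by simp [hu l hl]
      | mem w hw =>
        obtain ⟨u, v, hv, rfl⟩ := hw
        have hv := ih v hv
        intro l hl
        have hv' : ∀ r : Fin 5, r < l → v r = 0 := fun r hr => hv r (by omega)
        fin_cases l
        · simp [flagBracket]
        · simp [flagBracket]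
        · simp [flagBracket, hv' 0, hv' 1]
        · simp [flagBracket, hv' 0, hv' 1, hv' 2]
        · simp [flagBracket, hv' 0, hv' 1, hv' 2, hv' 3]
  refine ⟨5, (Submodule.eq_bot_iff _).2 fun x hx => ?_⟩
  ext l
  exact key 5 x hx l l.2

theorem jacobi_relations_of_isLieBracket_flagBracket {k : Type*} [Field k]
    {a b c d e f g h i j : k} (H : IsLieBracket k (flagBracket a b c d e f g h i j)) :
    a * j = 0 ∧ g * f = d * i - b * j := by
  obtain ⟨-, -, -, -, -, hJ⟩ := H
  have h₁ := congrFun (hJ ![1, 0, 0, 0, 0] ![0, 1, 0, 0, 0] ![0, 0, 0, 1, 0]) 4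
  have h₂ := congrFun (hJ ![1, 0, 0, 0, 0] ![0, 1, 0, 0, 0] ![0, 0, 1, 0, 0]) 4
  simp [flagBracket] at h₁ h₂
  exact ⟨by simpa [or_comm] using h₁, by linear_combination h₂⟩

theorem IsLieBracket.of_iso {k : Type*} [Field k] {n : ℕ}
    {br br' : (Fin n → k) → (Fin n → k) → (Fin n → k)} (H : IsLieBracket k br')
    (h : BracketIso br br') : IsLieBracket k br := by
  obtain ⟨e, he⟩ := h
  obtain ⟨h₁, h₂, h₃, h₄, h₅, h₆⟩ := H
  refine ⟨?_, ?_, ?_, ?_, ?_, ?_⟩ <;> intros <;> apply e.injective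
  · simp [he, h₁]
  · simp [he, h₂]
  · simp [he, h₃]
  · simp [he, h₄]
  · simp [he, h₅]
  · simp [he, ← h₆]

/-- A nilpotent bracket acts trivially modulo a proper subspace on some vector outside it. -/
theorem IsNilpotentBracket.exists_notMem {k : Type*} [Field k] {n : ℕ}
    {br : (Fin n → k) → (Fin n → k) → (Fin n → k)} (H : IsNilpotentBracket br)
    {U : Submodule k (Fin n → k)} (hU : U ≠ ⊤) : ∃ v ∉ U, ∀ x, br x v ∈ U := by
  classical
  obtain ⟨m, hm⟩ := H
  have hex : ∃ m, lcs br m ≤ U := ⟨m, by simp [hm]⟩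
  obtain h0 | hpos := Nat.eq_zero_or_pos (Nat.find hex)
  · exact absurd (top_le_iff.1 (by simpa [h0, lcs] using Nat.find_spec hex)) hU
  · obtain ⟨r, hr⟩ := Nat.exists_eq_add_of_lt hpos
    have hle := Nat.find_spec hex
    rw [hr, zero_add] at hle
    obtain ⟨v, hv, hvU⟩ := SetLike.not_le_iff_exists.1 (Nat.find_min hex (m := r) (by omega))
    exact ⟨v, hvU, fun x => hle (Submodule.subset_span ⟨x, v, hv, rfl⟩)⟩

theorem IsNilpotentBracket.exists_linearIndependent_cons {k : Type*} [Field k] {n m : ℕ}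
    {br : (Fin n → k) → (Fin n → k) → (Fin n → k)} (H : IsNilpotentBracket br) (hm : m < n)
    {v : Fin m → Fin n → k} (hv : LinearIndependent k v) :
    ∃ w, LinearIndependent k (Fin.cons w v : Fin (m + 1) → Fin n → k) ∧
      ∀ x, ∃ c : Fin m → k, ∑ l, c l • v l = br x w := by
  have hU : Submodule.span k (Set.range v) ≠ ⊤ := by
    intro h
    have := finrank_span_eq_card hv
    rw [h, finrank_top] at this
    simp at this
    omega
  obtain ⟨w, hw, hw'⟩ := H.exists_notMem hU
  exact ⟨w, linearIndependent_finCons.2 ⟨hv, hw⟩,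
    fun x => (Submodule.mem_span_range_iff_exists_fun k).1 (hw' x)⟩

theorem exists_flagBracket_iso {k : Type*} [Field k]
    {br : (Fin 5 → k) → (Fin 5 → k) → (Fin 5 → k)} (hL : IsLieBracket k br)
    (hN : IsNilpotentBracket br) :
    ∃ a b c d e f g h i j, BracketIso (flagBracket a b c d e f g h i j) br := by
  obtain ⟨v₄, l₄, b₄⟩ := hN.exists_linearIndependent_cons (by norm_num)
    (linearIndependent_empty_type (v := (Fin.elim0 : Fin 0 → Fin 5 → k)))
  obtain ⟨v₃, l₃, b₃⟩ := hN.exists_linearIndependent_cons (by norm_num) l₄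
  obtain ⟨v₂, l₂, b₂⟩ := hN.exists_linearIndependent_cons (by norm_num) l₃
  obtain ⟨v₁, l₁, b₁⟩ := hN.exists_linearIndependent_cons (by norm_num) l₂
  obtain ⟨v₀, l₀, -⟩ := hN.exists_linearIndependent_cons (by norm_num) l₁
  obtain ⟨c₀₁, h₀₁⟩ := b₁ v₀
  obtain ⟨c₀₂, h₀₂⟩ := b₂ v₀
  obtain ⟨c₁₂, h₁₂⟩ := b₂ v₁
  obtain ⟨c₀₃, h₀₃⟩ := b₃ v₀
  obtain ⟨c₁₃, h₁₃⟩ := b₃ v₁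
  obtain ⟨c₂₃, h₂₃⟩ := b₃ v₂
  have h₄ : ∀ x, br x v₄ = 0 := fun x => by
    obtain ⟨c, hc⟩ := b₄ x
    simpa using hc.symm
  obtain ⟨addl, smull, addr, smulr, alt, -⟩ := hL
  have skew : ∀ x y, br x y = -br y x := fun x y => by
    have := alt (x + y)
    rw [addl, addr, addr, alt, alt, zero_add, add_zero] at this
    exact eq_neg_of_add_eq_zero_left this
  have h₄' : ∀ x, br v₄ x = 0 := fun x => by rw [skew, h₄, neg_zero]
  simp [Fin.sum_univ_succ] at h₀₁ h₀₂ h₁₂ h₀₃ h₁₃ h₂₃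
  refine ⟨c₀₁ 0, c₀₁ 1, c₀₁ 2, c₀₂ 0, c₀₂ 1, c₀₃ 0, c₁₂ 0, c₁₂ 1, c₁₃ 0, c₂₃ 0,
    .of_vecMul (Matrix.of ![v₀, v₁, v₂, v₃, v₄]) ?_ fun x y => ?_⟩
  · rw [← isUnit_iff_ne_zero, ← Matrix.isUnit_iff_isUnit_det,
      ← Matrix.linearIndependent_rows_iff_isUnit]
    convert l₀ using 1
    ext r s
    fin_cases r <;> rfl
  · have hM (z : Fin 5 → k) : Matrix.vecMul z (Matrix.of ![v₀, v₁, v₂, v₃, v₄]) =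
        z 0 • v₀ + z 1 • v₁ + z 2 • v₂ + z 3 • v₃ + z 4 • v₄ :=
      (Matrix.vecMul_eq_sum _ _).trans (Fin.sum_univ_five _)
    simp [hM, addl, smull, addr, smulr, alt, h₄, h₄', skew v₁ v₀, skew v₂ v₀, skew v₃ v₀,
      skew v₂ v₁, skew v₃ v₁, skew v₃ v₂, ← h₀₁, ← h₀₂, ← h₁₂, ← h₀₃, ← h₁₃, ← h₂₃, flagBracket]
    module

theorem isStandard_of_isNilpotentBracket {k : Type*} [Field k]
    {br : (Fin 5 → k) → (Fin 5 → k) → (Fin 5 → k)} (hL : IsLieBracket k br)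
    (hN : IsNilpotentBracket br) : IsStandard br := by
  obtain ⟨a, b, c, d, e, f, g, h, i, j, H⟩ := exists_flagBracket_iso hL hN
  obtain ⟨haj, hJ⟩ := jacobi_relations_of_isLieBracket_flagBracket (hL.of_iso H)
  exact (isStandard_flagBracket haj hJ).of_iso H

theorem finrank_span_eq_card_of_coordinates {k : Type*} [Field k] {n : ℕ} {S : Set (Fin n → k)}
    (T : Finset (Fin n)) (hT : ∀ l ∈ T, Pi.single l 1 ∈ S) (hS : ∀ x ∈ S, ∀ l ∉ T, x l = 0) :
    Module.finrank k (Submodule.span k S) = T.card := by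
  have hspan : Submodule.span k S =
      Submodule.span k (Set.range fun l : T => (Pi.single (l : Fin n) 1 : Fin n → k)) := by
    apply le_antisymm
    · refine Submodule.span_le.2 fun x hx => ?_
      rw [pi_eq_sum_univ' x]
      refine Submodule.sum_mem _ fun l _ => ?_
      by_cases hl : l ∈ T
      · refine Submodule.smul_mem _ _ (Submodule.subset_span ⟨⟨l, hl⟩, ?_⟩)
        ext r
        simp [Pi.single_apply, eq_comm]
      · simp [hS x hx l hl]
    · refine Submodule.span_mono ?_
      rintro _ ⟨l, rfl⟩
      exact hT l l.2
  have hli : LinearIndependent k fun l : T => (Pi.single (l : Fin n) 1 : Fin n → k) := by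
    convert (Pi.basisFun k (Fin n)).linearIndependent.comp (fun l : T => (l : Fin n))
      Subtype.val_injective using 2 with l
    simp
  rw [hspan, finrank_span_eq_card hli, Fintype.card_coe]

/-- The dimensions of the centralizers of the first three terms of the lower central series. -/
noncomputable def centralizerRanks {k : Type*} [Field k] {n : ℕ}
    (br : (Fin n → k) → (Fin n → k) → (Fin n → k)) : ℕ × ℕ × ℕ :=
  (Module.finrank k (Submodule.span k {x | ∀ y, br x y = 0}),
    Module.finrank k (Submodule.span k {x | ∀ y z, br x (br y z) = 0}),
    Module.finrank k (Submodule.span k {x | ∀ y z w, br x (br y (br z w)) = 0}))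

theorem finrank_span_eq_of_linearEquiv {k : Type*} [Field k] {n : ℕ} {S S' : Set (Fin n → k)}
    (e : (Fin n → k) ≃ₗ[k] (Fin n → k)) (h : ∀ x, x ∈ S ↔ e x ∈ S') :
    Module.finrank k (Submodule.span k S) = Module.finrank k (Submodule.span k S') := by
  have hS : e '' S = S' := by
    ext x
    refine ⟨?_, fun hx => ⟨e.symm x, (h _).2 (by simpa using hx), by simp⟩⟩
    rintro ⟨y, hy, rfl⟩
    exact (h y).1 hy
  rw [← hS]
  have := Submodule.map_span (e : (Fin n → k) →ₗ[k] (Fin n → k)) S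
  rw [LinearEquiv.coe_coe] at this
  rw [← this]
  exact (LinearEquiv.finrank_map_eq e _).symm

theorem BracketIso.centralizerRanks_eq {k : Type*} [Field k] {n : ℕ}
    {br br' : (Fin n → k) → (Fin n → k) → (Fin n → k)} (h : BracketIso br br') :
    centralizerRanks br = centralizerRanks br' := by
  obtain ⟨e, he⟩ := h
  refine Prod.ext (finrank_span_eq_of_linearEquiv e fun x => ?_)
    (Prod.ext (finrank_span_eq_of_linearEquiv e fun x => ?_)
      (finrank_span_eq_of_linearEquiv e fun x => ?_))
  · refine Iff.trans ?_ (e.surjective.forall (p := fun y => br' (e x) y = 0)).symm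
    simp [← he]
  · refine Iff.trans ?_ (e.surjective.forall₂ (p := fun y z => br' (e x) (br' y z) = 0)).symm
    simp [← he]
  · refine Iff.trans ?_ (e.surjective.forall₃
      (p := fun y z w => br' (e x) (br' y (br' z w)) = 0)).symm
    simp [← he]

theorem centralizerRanks_flagBracket {k : Type*} [Field k] {a b c d e f g h i j : k}
    (T₀ T₁ T₂ : Finset (Fin 5))
    (h₀ : ∀ l ∈ T₀, ∀ y, flagBracket a b c d e f g h i j (Pi.single l 1) y = 0)
    (h₁ : ∀ l ∈ T₁, ∀ y z, flagBracket a b c d e f g h i j (Pi.single l 1)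
      (flagBracket a b c d e f g h i j y z) = 0)
    (h₂ : ∀ l ∈ T₂, ∀ y z w, flagBracket a b c d e f g h i j (Pi.single l 1)
      (flagBracket a b c d e f g h i j y (flagBracket a b c d e f g h i j z w)) = 0)
    (h₀' : ∀ x : Fin 5 → k, a * x 0 = 0 → a * x 1 = 0 → b * x 1 + d * x 2 = 0 →
      b * x 0 - g * x 2 = 0 → d * x 0 + g * x 1 = 0 → c * x 1 + e * x 2 + f * x 3 = 0 →
      c * x 0 - h * x 2 - i * x 3 = 0 → e * x 0 + h * x 1 - j * x 3 = 0 →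
      f * x 0 + i * x 1 + j * x 2 = 0 → ∀ l ∉ T₀, x l = 0)
    (h₁' : ∀ x : Fin 5 → k, a * (d * x 0 + g * x 1) = 0 →
      a * (e * x 0 + h * x 1 - j * x 3) + b * (f * x 0 + i * x 1 + j * x 2) = 0 →
      d * (f * x 0 + i * x 1 + j * x 2) = 0 → ∀ l ∉ T₁, x l = 0)
    (h₂' : ∀ x : Fin 5 → k, a * d * (f * x 0 + i * x 1 + j * x 2) = 0 → ∀ l ∉ T₂, x l = 0) :
    centralizerRanks (flagBracket a b c d e f g h i j) = (T₀.card, T₁.card, T₂.card) := by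
  refine Prod.ext (finrank_span_eq_card_of_coordinates T₀ h₀ fun x hx => ?_)
    (Prod.ext (finrank_span_eq_card_of_coordinates T₁ h₁ fun x hx => ?_)
      (finrank_span_eq_card_of_coordinates T₂ h₂ fun x hx => ?_))
  · have e₀ := hx ![1, 0, 0, 0, 0]
    have e₁ := hx ![0, 1, 0, 0, 0]
    have e₂ := hx ![0, 0, 1, 0, 0]
    have e₃ := hx ![0, 0, 0, 1, 0]
    simp [flagBracket, -mul_eq_zero] at e₀ e₁ e₂ e₃
    obtain ⟨e₀₂, e₀₃, e₀₄⟩ := e₀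
    obtain ⟨e₁₂, e₁₃, e₁₄⟩ := e₁
    obtain ⟨e₂₃, e₂₄⟩ := e₂
    apply h₀' <;> grind
  · have e₁ := hx ![1, 0, 0, 0, 0] ![0, 1, 0, 0, 0]
    have e₂ := hx ![1, 0, 0, 0, 0] ![0, 0, 1, 0, 0]
    simp [flagBracket, -mul_eq_zero] at e₁ e₂
    apply h₁' <;> grind
  · have e₁ := hx ![1, 0, 0, 0, 0] ![1, 0, 0, 0, 0] ![0, 1, 0, 0, 0]
    simp [flagBracket, -mul_eq_zero] at e₁
    apply h₂'; grind

theorem centralizerRanks_nilpModel (k : Type*) [Field k] (n : Fin 9) :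
    centralizerRanks (nilpModel k n) =
      (![(5, 5, 5), (3, 5, 5), (2, 4, 5), (1, 5, 5), (1, 4, 5), (1, 3, 4), (1, 4, 4), (2, 5, 5),
        (2, 3, 5)] : Fin 9 → ℕ × ℕ × ℕ) n := by
  fin_cases n
  · refine centralizerRanks_flagBracket .univ .univ .univ ?_ ?_ ?_ ?_ ?_ ?_ <;>
      simp +contextual [flagBracket]
  · refine centralizerRanks_flagBracket {2, 3, 4} .univ .univ ?_ ?_ ?_ ?_ ?_ ?_ <;>
      simp +contextual [flagBracket, Fin.forall_fin_succ]
  · refine centralizerRanks_flagBracket {3, 4} {1, 2, 3, 4} .univ ?_ ?_ ?_ ?_ ?_ ?_ <;>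
      simp +contextual [flagBracket, Fin.forall_fin_succ]
  · refine centralizerRanks_flagBracket {4} .univ .univ ?_ ?_ ?_ ?_ ?_ ?_ <;>
      simp +contextual [flagBracket, Fin.forall_fin_succ]
  · refine centralizerRanks_flagBracket {4} {1, 2, 3, 4} .univ ?_ ?_ ?_ ?_ ?_ ?_ <;>
      simp +contextual [flagBracket, Fin.forall_fin_succ]
  · refine centralizerRanks_flagBracket {4} {2, 3, 4} {1, 2, 3, 4} ?_ ?_ ?_ ?_ ?_ ?_ <;>
      simp +contextual [flagBracket, Fin.forall_fin_succ]
  · refine centralizerRanks_flagBracket {4} {1, 2, 3, 4} {1, 2, 3, 4} ?_ ?_ ?_ ?_ ?_ ?_ <;>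
      simp +contextual [flagBracket, Fin.forall_fin_succ]
  · refine centralizerRanks_flagBracket {3, 4} .univ .univ ?_ ?_ ?_ ?_ ?_ ?_ <;>
      simp +contextual [flagBracket, Fin.forall_fin_succ]
  · refine centralizerRanks_flagBracket {3, 4} {2, 3, 4} .univ ?_ ?_ ?_ ?_ ?_ ?_ <;>
      simp +contextual [flagBracket, Fin.forall_fin_succ]

theorem isNilpotentLie_nilpModel (k : Type*) [Field k] (n : Fin 9) :
    IsLieBracket k (nilpModel k n) ∧ IsNilpotentBracket (nilpModel k n) := by
  fin_cases n <;>
    exact ⟨isLieBracket_flagBracket (by simp) (by simp), isNilpotentBracket_flagBracket ..⟩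

/-- Over any field `k` with `char k ≠ 2` there are exactly 9
isomorphism classes of 5-dimensional nilpotent Lie algebras. -/
theorem nilpotent_lie_dim5_card (k : Type) [Field k] (hk : (2 : k) ≠ 0) :
    Nat.card (Quot (fun L L' : NilpLieStr k 5 => BracketIso L.1 L'.1)) = 9 := by
  rw [← Nat.card_fin 9]
  refine (Nat.card_eq_of_bijective
    (fun n => Quot.mk _ ⟨nilpModel k n, isNilpotentLie_nilpModel k n⟩) ⟨fun m n hmn => ?_, ?_⟩).symm
  · have h : centralizerRanks (nilpModel k m) = centralizerRanks (nilpModel k n) :=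
      congrArg (Quot.lift (fun L : NilpLieStr k 5 => centralizerRanks L.1)
        fun _ _ => BracketIso.centralizerRanks_eq) hmn
    rw [centralizerRanks_nilpModel, centralizerRanks_nilpModel] at h
    clear hmn
    revert m n
    decide
  · rintro ⟨br, hL, hN⟩
    obtain ⟨n, hn⟩ := isStandard_of_isNilpotentBracket hL hN
    exact ⟨n, Quot.sound hn⟩
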